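/- There is an absolute constant c such that the following holds: if Γ is a flat visibility representation of height 3 of a finite simple planar graph G with n vertices, then G has a planar straight-line drawing with the same y-coordinates as Γ, the same left-to-right order in each row, and width at most c·n. -/

import Mathlib

open Set

/-- A point in the plane. -/
abbrev Pt : Type := ℝ × ℝ

/-- A point has integer coordinates. -/
def IsIntPt (p : Pt) : Prop := (∃ a : ℤ, p.1 = (a : ℝ)) ∧ (∃ b : ℤ, p.2 = (b : ℝ))

/-- The (closed) segments of a polygonal chain, as pairs of consecutive corners. -/
def chainSegs (l : List Pt) : List (Pt × Pt) := l.zip l.tail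

/-- The set of points covered by a polygonal chain. -/
def chainSet (l : List Pt) : Set Pt := ⋃ s ∈ chainSegs l, segment ℝ s.1 s.2

/-- A polygonal chain is simple (non-self-intersecting): it has at least two
corners, all corners are distinct, and two of its segments meet only if they are
consecutive, and then only in their shared corner. -/
def IsSimpleChain (l : List Pt) : Prop :=
  2 ≤ l.length ∧ l.Nodup ∧
    ∀ i j : ℕ, i < j → ∀ (hi : i < (chainSegs l).length) (hj : j < (chainSegs l).length),
      segment ℝ ((chainSegs l).get ⟨i, hi⟩).1 ((chainSegs l).get ⟨i, hi⟩).2 ∩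
        segment ℝ ((chainSegs l).get ⟨j, hj⟩).1 ((chainSegs l).get ⟨j, hj⟩).2 ⊆
        if j = i + 1 then {((chainSegs l).get ⟨j, hj⟩).1} else (∅ : Set Pt)

/-- Every interior corner of the chain is a genuine bend (a direction change). -/
def GenuineBends (l : List Pt) : Prop :=
  ∀ i : ℕ, ∀ h : i + 2 < l.length,
    ¬ Collinear ℝ ({l.get ⟨i, by omega⟩, l.get ⟨i + 1, by omega⟩, l.get ⟨i + 2, h⟩} : Set Pt)

/-- The chain is a y-monotone path (horizontal segments allowed). -/
def IsMonoChain (l : List Pt) : Prop :=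
  (l.map Prod.snd).Chain' (· ≤ ·) ∨ (l.map Prod.snd).Chain' (fun a b => b ≤ a)

/-- All segments of the chain are horizontal or vertical. -/
def IsOrthoChain (l : List Pt) : Prop :=
  ∀ s ∈ chainSegs l, s.1.1 = s.2.1 ∨ s.1.2 = s.2.2

/-- A poly-line drawing of a graph `G`: every vertex is a point, and every edge
`uv` is the polygonal chain through the list `bends u v` of bend points
(listed in order from `u` to `v`). -/
structure PolylineDrawing {V : Type*} (G : SimpleGraph V) where
  pos : V → Pt
  bends : V → V → List Pt
  bends_symm : ∀ u v, bends v u = (bends u v).reverse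

namespace PolylineDrawing

variable {V : Type*} {G : SimpleGraph V}

/-- The corner list of the curve of edge `uv`. -/
def chain (D : PolylineDrawing G) (u v : V) : List Pt :=
  D.pos u :: (D.bends u v ++ [D.pos v])

/-- The set of points of the curve of edge `uv`. -/
def curve (D : PolylineDrawing G) (u v : V) : Set Pt := chainSet (D.chain u v)

/-- The defining elements of the drawing: vertex points and bends. -/
def points (D : PolylineDrawing G) : Set Pt :=
  Set.range D.pos ∪ ⋃ (u) (v) (_ : G.Adj u v), {p | p ∈ D.bends u v}

/-- The drawing is planar: vertex points are pairwise distinct, every edge curve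
is a simple chain whose interior corners are genuine bends, an edge curve contains
no vertex point other than its endpoints, and two distinct edge curves intersect
only in points of common endpoints. -/
def IsPlanar (D : PolylineDrawing G) : Prop :=
  Function.Injective D.pos ∧
  (∀ u v, G.Adj u v → IsSimpleChain (D.chain u v) ∧ GenuineBends (D.chain u v)) ∧
  (∀ u v w, G.Adj u v → w ≠ u → w ≠ v → D.pos w ∉ D.curve u v) ∧
  (∀ u v x y, G.Adj u v → G.Adj x y → s(u, v) ≠ s(x, y) →
    D.curve u v ∩ D.curve x y ⊆ D.pos '' (({u, v} : Set V) ∩ ({x, y} : Set V)))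

/-- All defining elements have integer coordinates. -/
def IntCoords (D : PolylineDrawing G) : Prop := ∀ p ∈ D.points, IsIntPt p

/-- A straight-line drawing: no edge has bends. -/
def IsStraightLine (D : PolylineDrawing G) : Prop := ∀ u v : V, D.bends u v = []

/-- Every edge curve is a y-monotone path. -/
def IsYMonotone (D : PolylineDrawing G) : Prop :=
  ∀ u v, G.Adj u v → IsMonoChain (D.chain u v)

/-- The drawing fits (after translation) in the rows `1, …, h`. -/
def InHeight (D : PolylineDrawing G) (h : ℕ) : Prop :=
  ∃ y0 : ℤ, ∀ p ∈ D.points, (y0 : ℝ) ≤ p.2 ∧ p.2 ≤ (y0 : ℝ) + (h : ℝ) - 1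

/-- The drawing fits (after translation) in the columns `1, …, w`. -/
def InWidth (D : PolylineDrawing G) (w : ℕ) : Prop :=
  ∃ x0 : ℤ, ∀ p ∈ D.points, (x0 : ℝ) ≤ p.1 ∧ p.1 ≤ (x0 : ℝ) + (w : ℝ) - 1

end PolylineDrawing

/-- An axis-parallel box (possibly degenerated to a segment or a point). -/
structure Box where
  x1 : ℝ
  x2 : ℝ
  y1 : ℝ
  y2 : ℝ
  hx : x1 ≤ x2
  hy : y1 ≤ y2

/-- The set of points of a box. -/
def Box.pts (b : Box) : Set Pt := Set.Icc b.x1 b.x2 ×ˢ Set.Icc b.y1 b.y2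

/-- An orthogonal drawing of a graph `G`: every vertex is an axis-aligned box, and
every edge `uv` is an axis-parallel polygonal chain `chain u v` (its first corner is
the attachment point on the box of `u`, its last corner the attachment point on the
box of `v`). -/
structure OrthDrawing {V : Type*} (G : SimpleGraph V) where
  box : V → Box
  chain : V → V → List Pt
  chain_symm : ∀ u v, chain v u = (chain u v).reverse

namespace OrthDrawing

variable {V : Type*} {G : SimpleGraph V}

/-- The set of points of the curve of edge `uv`. -/
def curve (D : OrthDrawing G) (u v : V) : Set Pt := chainSet (D.chain u v)

/-- The defining elements of the drawing: corners of vertex boxes, and corners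
(attachment points and bends) of edge chains. -/
def points (D : OrthDrawing G) : Set Pt :=
  (⋃ v, ({((D.box v).x1, (D.box v).y1), ((D.box v).x1, (D.box v).y2),
          ((D.box v).x2, (D.box v).y1), ((D.box v).x2, (D.box v).y2)} : Set Pt)) ∪
    ⋃ (u) (v) (_ : G.Adj u v), {p | p ∈ D.chain u v}

/-- All points covered by the drawing (boxes and edge curves). -/
def region (D : OrthDrawing G) : Set Pt :=
  (⋃ v, (D.box v).pts) ∪ ⋃ (u) (v) (_ : G.Adj u v), D.curve u v

/-- The drawing is planar: vertex boxes are pairwise disjoint; every edge curve is a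
simple axis-parallel chain, with genuine bends, joining the boxes of its endpoints;
an edge curve meets a vertex box only in its attachment points; and two distinct
edge curves intersect only in common endpoints. -/
def IsPlanar (D : OrthDrawing G) : Prop :=
  (∀ u v : V, u ≠ v → Disjoint (D.box u).pts (D.box v).pts) ∧
  (∀ u v, G.Adj u v → IsSimpleChain (D.chain u v) ∧ IsOrthoChain (D.chain u v) ∧
      GenuineBends (D.chain u v)) ∧
  (∀ u v, G.Adj u v → ∃ p q l, D.chain u v = p :: (l ++ [q]) ∧
      p ∈ (D.box u).pts ∧ q ∈ (D.box v).pts) ∧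
  (∀ u v w, G.Adj u v → D.curve u v ∩ (D.box w).pts ⊆
      {p | (w = u ∧ (D.chain u v).head? = some p) ∨
           (w = v ∧ (D.chain u v).getLast? = some p)}) ∧
  (∀ u v x y, G.Adj u v → G.Adj x y → s(u, v) ≠ s(x, y) →
      D.curve u v ∩ D.curve x y ⊆
        {p | ((D.chain u v).head? = some p ∨ (D.chain u v).getLast? = some p) ∧
             ((D.chain x y).head? = some p ∨ (D.chain x y).getLast? = some p)})

/-- A flat drawing: every vertex box is degenerated to a horizontal segment. -/
def IsFlat (D : OrthDrawing G) : Prop := ∀ v, (D.box v).y1 = (D.box v).y2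

/-- A visibility representation: an orthogonal drawing without bends, i.e. every
edge is a single horizontal or vertical segment. -/
def IsVR (D : OrthDrawing G) : Prop := ∀ u v, G.Adj u v → (D.chain u v).length = 2

/-- Every edge curve is a y-monotone path. -/
def IsYMonotone (D : OrthDrawing G) : Prop := ∀ u v, G.Adj u v → IsMonoChain (D.chain u v)

/-- All defining elements have integer coordinates. -/
def IntCoords (D : OrthDrawing G) : Prop := ∀ p ∈ D.points, IsIntPt p

/-- The drawing fits (after translation) in the rows `1, …, h`. -/
def InHeight (D : OrthDrawing G) (h : ℕ) : Prop :=
  ∃ y0 : ℤ, ∀ p ∈ D.points, (y0 : ℝ) ≤ p.2 ∧ p.2 ≤ (y0 : ℝ) + (h : ℝ) - 1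

/-- The drawing fits (after translation) in the columns `1, …, w`. -/
def InWidth (D : OrthDrawing G) (w : ℕ) : Prop :=
  ∃ x0 : ℤ, ∀ p ∈ D.points, (x0 : ℝ) ≤ p.1 ∧ p.1 ≤ (x0 : ℝ) + (w : ℝ) - 1

end OrthDrawing
/-!
Straight edges stay disjoint as long as the left-to-right order of every row is kept, where a row
contains its vertices and also its crossings with vertical edges. With three rows, the only
crossings are those of the edges `st` between the outer rows with the middle row, and moving to
straight lines puts them at the mean of the x-coordinates of `s` and `t`.

Place an outer vertex `v` at `2 * #(charge v)`. Then `st` crosses the middle row at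
`#(charge s) + #(charge t) = #(charge s ∪ charge t) + #(charge s ∩ charge t)`. The charges are
chosen such that the union grows strictly from one long edge to the next, while the intersection
consists of exactly the middle vertices to the left of `st`. The first term opens a gap between
consecutive long edges and the second one makes it wide enough for the middle vertices in it.
-/

lemma chainSet_pair (p q : Pt) : chainSet [p, q] = segment ℝ p q := by
  simp [chainSet, chainSegs]

lemma isSimpleChain_pair {p q : Pt} (hpq : p ≠ q) : IsSimpleChain [p, q] := by
  refine ⟨le_rfl, by simpa using hpq, fun i j hij _ hj => ?_⟩
  simp only [chainSegs, List.tail_cons, List.zip_cons_cons, List.zip_nil_right,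
    List.length_singleton] at hj
  omega

lemma genuineBends_pair (p q : Pt) : GenuineBends [p, q] := by
  intro i hi
  simp only [List.length_cons, List.length_nil] at hi
  omega

lemma mk_mem_segment_vertical {c y₁ y₂ k : ℝ} (hk : k ∈ Icc y₁ y₂) :
    ((c, k) : Pt) ∈ segment ℝ ((c, y₁) : Pt) (c, y₂) := by
  rw [← Prod.image_mk_segment_right, segment_eq_Icc (hk.1.trans hk.2)]
  exact mem_image_of_mem _ hk

lemma mk_mem_segment_horizontal {c x₁ x₂ k : ℝ} (hk : k ∈ Icc x₁ x₂) :
    ((k, c) : Pt) ∈ segment ℝ ((x₁, c) : Pt) (x₂, c) := by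
  rw [← Prod.image_mk_segment_left, segment_eq_Icc (hk.1.trans hk.2)]
  exact mem_image_of_mem (fun t => ((t, c) : Pt)) hk

/-- The x-coordinate at height `k` of the line through `p` and `q`, for `p.2 ≠ q.2`. -/
noncomputable def xAt (p q : Pt) (k : ℝ) : ℝ :=
  p.1 + (k - p.2) / (q.2 - p.2) * (q.1 - p.1)

lemma xAt_left (p q : Pt) : xAt p q p.2 = p.1 := by
  simp [xAt]

lemma xAt_right {p q : Pt} (h : p.2 ≠ q.2) : xAt p q q.2 = q.1 := by
  rw [xAt, div_self (sub_ne_zero.2 h.symm)]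
  ring

lemma xAt_interpolate (p q : Pt) (k₁ k₂ k : ℝ) :
    (k₂ - k₁) * xAt p q k = (k₂ - k) * xAt p q k₁ + (k - k₁) * xAt p q k₂ := by
  simp only [xAt]
  ring

lemma snd_mem_Icc_of_mem_segment {p q z : Pt} (h : p.2 ≤ q.2) (hz : z ∈ segment ℝ p q) :
    z.2 ∈ Icc p.2 q.2 := by
  rw [← segment_eq_Icc h]
  exact (Prod.segment_subset p q hz).2

lemma fst_mem_Icc_of_mem_segment {p q z : Pt} (h : p.1 ≤ q.1) (hz : z ∈ segment ℝ p q) :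
    z.1 ∈ Icc p.1 q.1 := by
  rw [← segment_eq_Icc h]
  exact (Prod.segment_subset p q hz).1

lemma fst_eq_xAt_of_mem_segment {p q z : Pt} (h : p.2 ≠ q.2) (hz : z ∈ segment ℝ p q) :
    z.1 = xAt p q z.2 := by
  rw [segment_eq_image_lineMap] at hz
  obtain ⟨t, -, rfl⟩ := hz
  have hpq : q.2 - p.2 ≠ 0 := sub_ne_zero.2 h.symm
  simp only [xAt, AffineMap.lineMap_apply, vsub_eq_sub, vadd_eq_add, Prod.fst_add, Prod.snd_add,
    Prod.smul_fst, Prod.smul_snd, Prod.fst_sub, Prod.snd_sub, smul_eq_mul, add_sub_cancel_right,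
    mul_div_cancel_right₀ _ hpq]
  ring

lemma xAt_eq_of_eq_between {p q p' q' : Pt} {k₁ k₂ k : ℝ} (hk : k ∈ Ioo k₁ k₂)
    (h₁ : xAt p q k₁ ≤ xAt p' q' k₁) (h₂ : xAt p q k₂ ≤ xAt p' q' k₂)
    (h : xAt p q k = xAt p' q' k) :
    xAt p q k₁ = xAt p' q' k₁ ∧ xAt p q k₂ = xAt p' q' k₂ := by
  have hsum : (k₂ - k) * (xAt p' q' k₁ - xAt p q k₁) +
      (k - k₁) * (xAt p' q' k₂ - xAt p q k₂) = 0 := by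
    linear_combination xAt_interpolate p q k₁ k₂ k - xAt_interpolate p' q' k₁ k₂ k -
      (k₂ - k₁) * h
  have hk₁ : 0 < k - k₁ := sub_pos.2 hk.1
  have hk₂ : 0 < k₂ - k := sub_pos.2 hk.2
  rw [add_eq_zero_iff_of_nonneg (mul_nonneg hk₂.le (sub_nonneg.2 h₁))
    (mul_nonneg hk₁.le (sub_nonneg.2 h₂))] at hsum
  constructor
  · linarith [(mul_eq_zero_iff_left hk₂.ne').1 hsum.1]
  · linarith [(mul_eq_zero_iff_left hk₁.ne').1 hsum.2]

namespace PolylineDrawing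

variable {V : Type*} {G : SimpleGraph V} {p : V → Pt}

/-- The straight-line drawing of `G` with vertex points `p`. -/
def ofPos (G : SimpleGraph V) (p : V → Pt) : PolylineDrawing G where
  pos := p
  bends _ _ := []
  bends_symm _ _ := rfl

lemma curve_ofPos (u v : V) : (ofPos G p).curve u v = segment ℝ (p u) (p v) :=
  chainSet_pair _ _

lemma points_ofPos : (ofPos G p).points = range p := by
  simp [points, ofPos]

lemma isPlanar_ofPos (hp : Function.Injective p)
    (hvertex : ∀ u v w, G.Adj u v → p w ∈ segment ℝ (p u) (p v) → w = u ∨ w = v)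
    (hedge : ∀ u v x z, G.Adj u v → G.Adj x z → s(u, v) ≠ s(x, z) →
      segment ℝ (p u) (p v) ∩ segment ℝ (p x) (p z) ⊆ p '' ({u, v} ∩ {x, z})) :
    (ofPos G p).IsPlanar := by
  refine ⟨hp, fun u v huv => ⟨isSimpleChain_pair (hp.ne huv.ne), genuineBends_pair _ _⟩,
    fun u v w huv hwu hwv hw => ?_, fun u v x z huv hxz hne => ?_⟩
  · rw [curve_ofPos] at hw
    exact (hvertex u v w huv hw).elim hwu hwv
  · rw [curve_ofPos, curve_ofPos]
    exact hedge u v x z huv hxz hne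

end PolylineDrawing

namespace OrthDrawing

variable {V : Type*} {G : SimpleGraph V} {D : OrthDrawing G}

/-- The drawing is a planar flat visibility representation. -/
structure IsPlanarFlatVR (D : OrthDrawing G) : Prop where
  planar : D.IsPlanar
  flat : D.IsFlat
  visibility : D.IsVR

/-- The height of the bar of `v`, meaningful in flat drawings. -/
abbrev row (D : OrthDrawing G) (v : V) : ℝ := (D.box v).y1

/-- An edge between different rows, directed upwards. -/
def IsUp (D : OrthDrawing G) (u v : V) : Prop := G.Adj u v ∧ D.row u < D.row v

/-- The column of a vertical edge `uv`. The default `0` of an empty chain is never used. -/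
noncomputable def col (D : OrthDrawing G) (u v : V) : ℝ := ((D.chain u v).head?.getD 0).1

/-- The bars of `u` and `v` lie in the same row, that of `u` strictly to the left. -/
def RowLT (D : OrthDrawing G) (u v : V) : Prop := D.row u = D.row v ∧ (D.box u).x2 < (D.box v).x1

lemma mk_mem_pts (b : Box) {c : ℝ} (hc : c ∈ Icc b.x1 b.x2) : (c, b.y1) ∈ b.pts :=
  ⟨hc, le_rfl, b.hy⟩

lemma IsFlat.snd_eq_row (hD : D.IsFlat) {v : V} {p : Pt} (hp : p ∈ (D.box v).pts) :
    p.2 = D.row v :=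
  le_antisymm (hp.2.2.trans_eq (hD v).symm) hp.2.1

lemma IsPlanar.eq_or_eq_of_mem_curve (hD : D.IsPlanar) {u v w : V} (huv : G.Adj u v) {p : Pt}
    (hp : p ∈ D.curve u v) (hpw : p ∈ (D.box w).pts) : w = u ∨ w = v :=
  (hD.2.2.2.1 u v w huv ⟨hp, hpw⟩).imp And.left And.left

lemma IsUp.eq_and_eq_of_sym2_eq {s t s' t' : V} (hst : D.IsUp s t) (hst' : D.IsUp s' t')
    (h : s(s, t) = s(s', t')) : s = s' ∧ t = t' := by
  rcases Sym2.eq_iff.1 h with h | ⟨rfl, rfl⟩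
  · exact h
  · exact absurd hst.2 hst'.2.asymm

namespace IsPlanarFlatVR

variable (hD : D.IsPlanarFlatVR)
include hD

lemma exists_chain_eq_pair {u v : V} (huv : G.Adj u v) :
    ∃ p q : Pt, D.chain u v = [p, q] ∧ p ∈ (D.box u).pts ∧ q ∈ (D.box v).pts ∧
      (p.1 = q.1 ∨ p.2 = q.2) := by
  obtain ⟨p, q, l, hchain, hp, hq⟩ := hD.planar.2.2.1 u v huv
  have hlength := hD.visibility u v huv
  obtain rfl : l = [] := by simpa [hchain] using hlength
  refine ⟨p, q, hchain, hp, hq, (hD.planar.2.1 u v huv).2.1 (p, q) ?_⟩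
  simp [hchain, chainSegs]

lemma chain_eq_of_isUp {u v : V} (huv : D.IsUp u v) :
    D.chain u v = [(D.col u v, D.row u), (D.col u v, D.row v)] ∧
      D.col u v ∈ Icc (D.box u).x1 (D.box u).x2 ∧ D.col u v ∈ Icc (D.box v).x1 (D.box v).x2 := by
  obtain ⟨p, q, hchain, hp, hq, hpq⟩ := hD.exists_chain_eq_pair huv.1
  have hp₂ := hD.flat.snd_eq_row hp
  have hq₂ := hD.flat.snd_eq_row hq
  have hpq₁ : p.1 = q.1 := hpq.resolve_right (by rw [hp₂, hq₂]; exact huv.2.ne)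
  have hcol : D.col u v = p.1 := by simp [col, hchain]
  refine ⟨?_, hcol ▸ hp.1, hcol ▸ hpq₁ ▸ hq.1⟩
  rw [hchain, hcol, ← hp₂, ← hq₂]
  nth_rw 2 [hpq₁]

lemma mem_curve_of_isUp {u v : V} (huv : D.IsUp u v) {k : ℝ} (hk : k ∈ Icc (D.row u) (D.row v)) :
    (D.col u v, k) ∈ D.curve u v := by
  rw [curve, (hD.chain_eq_of_isUp huv).1, chainSet_pair]
  exact mk_mem_segment_vertical hk

lemma mem_curve_of_rowLT {u v : V} (huv : G.Adj u v) (hlt : D.RowLT u v) {c : ℝ}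
    (hc : c ∈ Icc (D.box u).x2 (D.box v).x1) : (c, D.row u) ∈ D.curve u v := by
  obtain ⟨⟨p₁, p₂⟩, ⟨q₁, q₂⟩, hchain, hp, hq, -⟩ := hD.exists_chain_eq_pair huv
  obtain rfl : p₂ = D.row u := hD.flat.snd_eq_row hp
  obtain rfl : q₂ = D.row u := (hD.flat.snd_eq_row hq).trans hlt.1.symm
  rw [curve, hchain, chainSet_pair]
  exact mk_mem_segment_horizontal ⟨hp.1.2.trans hc.1, hc.2.trans hq.1.1⟩

lemma snd_eq_row_of_mem_curve_inter {u v s t : V} (huv : G.Adj u v) (hst : G.Adj s t)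
    (hne : s(u, v) ≠ s(s, t)) {p : Pt} (hp : p ∈ D.curve u v ∩ D.curve s t) :
    p.2 = D.row s ∨ p.2 = D.row t := by
  obtain ⟨q, r, hchain, hq, hr, -⟩ := hD.exists_chain_eq_pair hst
  have hend := (hD.planar.2.2.2.2 u v s t huv hst hne hp).2
  simp only [hchain, List.head?_cons, List.getLast?_cons_cons, List.getLast?_singleton,
    Option.some.injEq] at hend
  rcases hend with rfl | rfl
  · exact .inl (hD.flat.snd_eq_row hq)
  · exact .inr (hD.flat.snd_eq_row hr)

lemma col_notMem_Icc {s t w : V} (hst : D.IsUp s t) (hw : D.row w ∈ Ioo (D.row s) (D.row t)) :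
    D.col s t ∉ Icc (D.box w).x1 (D.box w).x2 := by
  intro hcol
  rcases hD.planar.eq_or_eq_of_mem_curve hst.1
    (hD.mem_curve_of_isUp hst (Ioo_subset_Icc_self hw)) (mk_mem_pts _ hcol) with rfl | rfl
  · exact hw.1.false
  · exact hw.2.false

lemma eq_and_eq_of_col_eq {s t s' t' : V} (hst : D.IsUp s t) (hst' : D.IsUp s' t') {k : ℝ}
    (hk : k ∈ Ioo (D.row s) (D.row t)) (hk' : k ∈ Ioo (D.row s') (D.row t'))
    (hcol : D.col s t = D.col s' t') : s = s' ∧ t = t' := by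
  by_contra hne
  rcases hD.snd_eq_row_of_mem_curve_inter hst.1 hst'.1 (mt (hst.eq_and_eq_of_sym2_eq hst') hne)
    ⟨hD.mem_curve_of_isUp hst (Ioo_subset_Icc_self hk),
      hcol ▸ hD.mem_curve_of_isUp hst' (Ioo_subset_Icc_self hk')⟩ with h | h
  · exact hk'.1.ne' h
  · exact hk'.2.ne h

end IsPlanarFlatVR

/-- The elements of the left-to-right order of the rows: each vertex, and each crossing of a
vertical edge `st` with a row at height `k` strictly between its endpoints. -/
inductive RowItem (D : OrthDrawing G)
  | vertex (v : V)
  | crossing (s t : V) (k : ℝ) (hst : D.IsUp s t) (hk : k ∈ Ioo (D.row s) (D.row t))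
      (hrow : k ∈ range D.row)

/-- The vertex points of the drawing that keeps the rows of `D` and has x-coordinates `x`. -/
def place (D : OrthDrawing G) (x : V → ℝ) (v : V) : Pt := (x v, D.row v)

namespace RowItem

/-- The height of the row of an item. -/
def level : D.RowItem → ℝ
  | vertex v => D.row v
  | crossing _ _ k _ _ _ => k

/-- The left end of an item in the visibility representation. -/
noncomputable def lo : D.RowItem → ℝ
  | vertex v => (D.box v).x1
  | crossing s t _ _ _ _ => D.col s t

/-- The right end of an item in the visibility representation. -/
noncomputable def hi : D.RowItem → ℝ
  | vertex v => (D.box v).x2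
  | crossing s t _ _ _ _ => D.col s t

/-- The x-coordinate of an item in the straight-line drawing with x-coordinates `x`. -/
noncomputable def pos (x : V → ℝ) : D.RowItem → ℝ
  | vertex v => x v
  | crossing s t k _ _ _ => xAt (D.place x s) (D.place x t) k

/-- The item is an endpoint or a crossing of the edge `uv`. -/
def OnEdge (u v : V) : D.RowItem → Prop
  | vertex w => w = u ∨ w = v
  | crossing s t _ _ _ _ => s = u ∧ t = v

lemma lo_le_hi : ∀ I : D.RowItem, I.lo ≤ I.hi
  | vertex v => (D.box v).hx
  | crossing _ _ _ _ _ _ => le_rfl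

lemma eq_of_mem_Icc (hD : D.IsPlanarFlatVR) {I J : D.RowItem} (hIJ : I.level = J.level) {c : ℝ}
    (hI : c ∈ Icc I.lo I.hi) (hJ : c ∈ Icc J.lo J.hi) : I = J := by
  cases I with
  | vertex v =>
    cases J with
    | vertex w =>
      by_contra hne
      refine (hD.planar.1 v w fun h => hne (h ▸ rfl)).le_bot ⟨mk_mem_pts _ hI, ?_⟩
      rw [show (D.box v).y1 = (D.box w).y1 from hIJ]
      exact mk_mem_pts _ hJ
    | crossing s t k hst hk _ =>
      obtain rfl : D.row v = k := hIJ
      obtain rfl : D.col s t = c := le_antisymm hJ.1 hJ.2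
      exact (hD.col_notMem_Icc hst hk hI).elim
  | crossing s t k hst hk _ =>
    obtain rfl : D.col s t = c := le_antisymm hI.1 hI.2
    cases J with
    | vertex w =>
      obtain rfl : k = D.row w := hIJ
      exact (hD.col_notMem_Icc hst hk hJ).elim
    | crossing s' t' k' hst' hk' _ =>
      obtain rfl : k = k' := hIJ
      obtain ⟨rfl, rfl⟩ := hD.eq_and_eq_of_col_eq hst hst' hk hk' (le_antisymm hJ.2 hJ.1)
      rfl

lemma hi_lt_lo_or (hD : D.IsPlanarFlatVR) {I J : D.RowItem} (hIJ : I.level = J.level)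
    (hne : I ≠ J) : I.hi < J.lo ∨ J.hi < I.lo := by
  by_contra! h
  exact hne <| eq_of_mem_Icc hD hIJ (c := max I.lo J.lo) ⟨le_max_left _ _, max_le I.lo_le_hi h.1⟩
    ⟨le_max_right _ _, max_le h.2 J.lo_le_hi⟩

lemma eq_or_hi_lt_lo (hD : D.IsPlanarFlatVR) {I J : D.RowItem} (hIJ : I.level = J.level)
    {c c' : ℝ} (hc : c ∈ Icc I.lo I.hi) (hc' : c' ∈ Icc J.lo J.hi) (hcc' : c ≤ c') :
    I = J ∨ I.hi < J.lo := by
  refine or_iff_not_imp_left.2 fun hne => (hi_lt_lo_or hD hIJ hne).resolve_right fun h => ?_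
  exact absurd hcc' (hc'.2.trans_lt (h.trans_le hc.1)).not_ge

lemma not_between_of_rowLT (hD : D.IsPlanarFlatVR) {u v : V} (huv : G.Adj u v)
    (hlt : D.RowLT u v) {I : D.RowItem} (hI : I.level = D.row u) :
    ¬ ((D.box u).x2 < I.lo ∧ I.hi < (D.box v).x1) := by
  rintro ⟨hu, hv⟩
  have hmem := hD.mem_curve_of_rowLT huv hlt ⟨hu.le, I.lo_le_hi.trans hv.le⟩
  cases I with
  | vertex w =>
    have hw : (D.box w).y1 = D.row u := hI
    rcases hD.planar.eq_or_eq_of_mem_curve huv hmem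
      (hw ▸ mk_mem_pts _ ⟨le_rfl, (D.box w).hx⟩) with rfl | rfl
    · exact hu.not_ge (D.box w).hx
    · exact hv.not_ge (D.box w).hx
  | crossing s t k hst hk _ =>
    obtain rfl : k = D.row u := hI
    have hne : s(u, v) ≠ s(s, t) := by
      intro h
      rcases Sym2.eq_iff.1 h with ⟨rfl, rfl⟩ | ⟨rfl, rfl⟩
      · exact hst.2.ne hlt.1
      · exact hst.2.ne' hlt.1
    rcases hD.snd_eq_row_of_mem_curve_inter huv hst.1 hne
      ⟨hmem, hD.mem_curve_of_isUp hst (Ioo_subset_Icc_self hk)⟩ with h | h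
    · exact hk.1.ne' h
    · exact hk.2.ne h

end RowItem

/-- Moving the vertices to the x-coordinates `x` and drawing the edges straight keeps the
left-to-right order of the items of each row. -/
def OrderPreserving (D : OrthDrawing G) (x : V → ℝ) : Prop :=
  ∀ I J : D.RowItem, I.level = J.level → I.hi < J.lo → I.pos x < J.pos x

/-- The direction of edges that points upwards, and to the right inside a row. -/
def IsDirected (D : OrthDrawing G) (u v : V) : Prop := D.IsUp u v ∨ D.RowLT u v

lemma isDirected_or (hD : D.IsPlanarFlatVR) {u v : V} (huv : G.Adj u v) :
    D.IsDirected u v ∨ D.IsDirected v u := by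
  rcases lt_trichotomy (D.row u) (D.row v) with h | h | h
  · exact .inl (.inl ⟨huv, h⟩)
  · exact (RowItem.hi_lt_lo_or hD (I := .vertex u) (J := .vertex v) h (by simpa using huv.ne)).imp
      (fun hlt => .inr ⟨h, hlt⟩) (fun hlt => .inr ⟨h.symm, hlt⟩)
  · exact .inr (.inl ⟨huv.symm, h⟩)

lemma IsUp.eq_and_eq_of_mem {u v w w' : V} (huv : D.IsUp u v) (hw : w ∈ ({u, v} : Set V))
    (hw' : w' ∈ ({u, v} : Set V)) (hlt : D.row w < D.row w') : w = u ∧ w' = v := by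
  rcases hw with rfl | rfl <;> rcases hw' with rfl | rfl
  · exact (hlt.false).elim
  · exact ⟨rfl, rfl⟩
  · exact (hlt.asymm huv.2).elim
  · exact (hlt.false).elim

lemma IsUp.exists_onEdge (hD : D.IsPlanarFlatVR) {u v : V} (huv : D.IsUp u v) (x : V → ℝ) {k : ℝ}
    (hrow : k ∈ range D.row) (hk : k ∈ Icc (D.row u) (D.row v)) :
    ∃ I : D.RowItem, I.level = k ∧ D.col u v ∈ Icc I.lo I.hi ∧ I.OnEdge u v ∧
      I.pos x = xAt (D.place x u) (D.place x v) k := by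
  obtain ⟨-, hcolu, hcolv⟩ := hD.chain_eq_of_isUp huv
  rcases hk.1.eq_or_lt with rfl | hu
  · exact ⟨.vertex u, rfl, hcolu, .inl rfl, (xAt_left (D.place x u) (D.place x v)).symm⟩
  rcases hk.2.eq_or_lt with rfl | hv
  · exact ⟨.vertex v, rfl, hcolv, .inr rfl,
      (xAt_right (p := D.place x u) (q := D.place x v) huv.2.ne).symm⟩
  · exact ⟨.crossing u v k huv ⟨hu, hv⟩ hrow, rfl, ⟨le_rfl, le_rfl⟩, ⟨rfl, rfl⟩, rfl⟩

lemma exists_Icc_row_inter_eq (D : OrthDrawing G) (u v u' v' : V) :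
    ∃ a ∈ range D.row, ∃ b ∈ range D.row,
      Icc (D.row u) (D.row v) ∩ Icc (D.row u') (D.row v') = Icc a b := by
  refine ⟨_, ?_, _, ?_, Icc_inter_Icc⟩
  · exact (max_choice (D.row u) (D.row u')).elim (fun h => ⟨u, h.symm⟩) fun h => ⟨u', h.symm⟩
  · exact (min_choice (D.row v) (D.row v')).elim (fun h => ⟨v, h.symm⟩) fun h => ⟨v', h.symm⟩

lemma RowItem.OnEdge.exists_eq_vertex {I : D.RowItem} {u v x z : V} (huv : I.OnEdge u v)
    (hxz : I.OnEdge x z) (hne : ¬ (u = x ∧ v = z)) :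
    ∃ w ∈ ({u, v} ∩ {x, z} : Set V), I = .vertex w := by
  cases I with
  | vertex w => exact ⟨w, ⟨huv, hxz⟩, rfl⟩
  | crossing s t k => exact absurd ⟨huv.1.symm.trans hxz.1, huv.2.symm.trans hxz.2⟩ hne

namespace OrderPreserving

variable {x : V → ℝ} (hx : D.OrderPreserving x) (hD : D.IsPlanarFlatVR)
include hx

lemma lt_of_rowLT {u v : V} (huv : D.RowLT u v) : x u < x v :=
  hx (.vertex u) (.vertex v) huv.1 huv.2

include hD

lemma eq_of_pos_eq {I J : D.RowItem} (hIJ : I.level = J.level) (hpos : I.pos x = J.pos x) :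
    I = J := by
  by_contra hne
  rcases RowItem.hi_lt_lo_or hD hIJ hne with h | h
  · exact (hx I J hIJ h).ne hpos
  · exact (hx J I hIJ.symm h).ne' hpos

lemma place_injective : Function.Injective (D.place x) := by
  intro u v huv
  simpa using hx.eq_of_pos_eq hD (I := .vertex u) (J := .vertex v) (congrArg Prod.snd huv)
    (congrArg Prod.fst huv)

lemma eq_endpoint_of_pos_mem_Icc {u v : V} (huv : G.Adj u v) (hlt : D.RowLT u v) {I : D.RowItem}
    (hI : I.level = D.row u) (hpos : I.pos x ∈ Icc (x u) (x v)) :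
    I = .vertex u ∨ I = .vertex v := by
  have hI' : I.level = D.row v := hI.trans hlt.1
  by_contra! hne
  have hu := (RowItem.hi_lt_lo_or hD hI hne.1).resolve_left fun h =>
    hpos.1.not_gt (hx I (.vertex u) hI h)
  have hv := (RowItem.hi_lt_lo_or hD hI' hne.2).resolve_right fun h =>
    hpos.2.not_gt (hx (.vertex v) I hI'.symm h)
  exact RowItem.not_between_of_rowLT hD huv hlt hI ⟨hu, hv⟩

lemma vertex_eq_of_mem_Icc {u v w : V} (huv : G.Adj u v) (hlt : D.RowLT u v)
    (hw : D.row w = D.row u) (hpos : x w ∈ Icc (x u) (x v)) : w = u ∨ w = v := by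
  simpa using hx.eq_endpoint_of_pos_mem_Icc hD huv hlt (I := .vertex w) hw hpos

lemma xAt_le_and_exists_of_eq {u v u' v' : V} (huv : D.IsUp u v) (huv' : D.IsUp u' v')
    (hne : ¬ (u = u' ∧ v = v')) (hcol : D.col u v ≤ D.col u' v') {k : ℝ} (hrow : k ∈ range D.row)
    (hk : k ∈ Icc (D.row u) (D.row v)) (hk' : k ∈ Icc (D.row u') (D.row v')) :
    xAt (D.place x u) (D.place x v) k ≤ xAt (D.place x u') (D.place x v') k ∧
      (xAt (D.place x u) (D.place x v) k = xAt (D.place x u') (D.place x v') k →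
        ∃ w ∈ ({u, v} ∩ {u', v'} : Set V),
          D.place x w = (xAt (D.place x u) (D.place x v) k, k)) := by
  obtain ⟨I, hI, hcolI, hIuv, hIpos⟩ := huv.exists_onEdge hD x hrow hk
  obtain ⟨J, hJ, hcolJ, hJuv, hJpos⟩ := huv'.exists_onEdge hD x hrow hk'
  rw [← hIpos, ← hJpos]
  have hIJ := hI.trans hJ.symm
  refine ⟨?_, fun heq => ?_⟩
  · rcases RowItem.eq_or_hi_lt_lo hD hIJ hcolI hcolJ hcol with rfl | h
    · exact le_rfl
    · exact (hx I J hIJ h).le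
  · obtain rfl := hx.eq_of_pos_eq hD hIJ heq
    obtain ⟨w, hw, rfl⟩ := hIuv.exists_eq_vertex hJuv hne
    exact ⟨w, hw, Prod.ext rfl hI⟩

/-- Over their common height range, the two segments are ordered alike at both ends, so they can
only touch there, or else they share both endpoints. -/
lemma inter_subset_of_isUp_of_isUp {u v u' v' : V} (huv : D.IsUp u v) (huv' : D.IsUp u' v')
    (hne : ¬ (u = u' ∧ v = v')) :
    segment ℝ (D.place x u) (D.place x v) ∩ segment ℝ (D.place x u') (D.place x v') ⊆
      D.place x '' ({u, v} ∩ {u', v'}) := by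
  wlog hcol : D.col u v ≤ D.col u' v' generalizing u v u' v' with H
  · rw [inter_comm, inter_comm {u, v}]
    exact H huv' huv (fun h => hne ⟨h.1.symm, h.2.symm⟩) (le_of_not_ge hcol)
  rintro ⟨p, k⟩ ⟨hp, hp'⟩
  obtain rfl : p = xAt (D.place x u) (D.place x v) k := fst_eq_xAt_of_mem_segment huv.2.ne hp
  have hmeet := fst_eq_xAt_of_mem_segment huv'.2.ne hp'
  obtain ⟨a, ha, b, hb, hinter⟩ := D.exists_Icc_row_inter_eq u v u' v'
  have hk : k ∈ Icc a b := hinter ▸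
    ⟨snd_mem_Icc_of_mem_segment huv.2.le hp, snd_mem_Icc_of_mem_segment huv'.2.le hp'⟩
  have hab := hk.1.trans hk.2
  obtain ⟨ha₁, ha₂⟩ := hinter.ge (left_mem_Icc.2 hab)
  obtain ⟨hb₁, hb₂⟩ := hinter.ge (right_mem_Icc.2 hab)
  obtain ⟨hlea, heqa⟩ := hx.xAt_le_and_exists_of_eq hD huv huv' hne hcol ha ha₁ ha₂
  obtain ⟨hleb, heqb⟩ := hx.xAt_le_and_exists_of_eq hD huv huv' hne hcol hb hb₁ hb₂
  rcases hk.1.eq_or_lt with rfl | hak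
  · exact heqa hmeet
  rcases hk.2.eq_or_lt with rfl | hkb
  · exact heqb hmeet
  obtain ⟨hmeeta, hmeetb⟩ := xAt_eq_of_eq_between ⟨hak, hkb⟩ hlea hleb hmeet
  obtain ⟨w, hw, hwa⟩ := heqa hmeeta
  obtain ⟨w', hw', hwb⟩ := heqb hmeetb
  obtain rfl : D.row w = a := congrArg Prod.snd hwa
  obtain rfl : D.row w' = b := congrArg Prod.snd hwb
  obtain ⟨rfl, rfl⟩ := huv.eq_and_eq_of_mem hw.1 hw'.1 (hak.trans hkb)
  exact (hne (huv'.eq_and_eq_of_mem hw.2 hw'.2 (hak.trans hkb))).elim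

lemma inter_subset_of_rowLT_of_isUp {u v s t : V} (huv : G.Adj u v) (hlt : D.RowLT u v)
    (hst : D.IsUp s t) :
    segment ℝ (D.place x u) (D.place x v) ∩ segment ℝ (D.place x s) (D.place x t) ⊆
      D.place x '' ({u, v} ∩ {s, t}) := by
  rintro p ⟨hp, hp'⟩
  have hp₂ : p.2 = D.row u := by
    simpa [place, hlt.1] using snd_mem_Icc_of_mem_segment hlt.1.le hp
  have hp₁ := fst_mem_Icc_of_mem_segment (hx.lt_of_rowLT hlt).le hp
  obtain ⟨I, hI, -, hIst, hIpos⟩ := hst.exists_onEdge hD x ⟨u, rfl⟩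
    (hp₂ ▸ snd_mem_Icc_of_mem_segment hst.2.le hp')
  rw [← hp₂, ← fst_eq_xAt_of_mem_segment hst.2.ne hp'] at hIpos
  obtain ⟨w, hw, rfl⟩ : ∃ w ∈ ({u, v} : Set V), I = .vertex w := by
    rcases hx.eq_endpoint_of_pos_mem_Icc hD huv hlt hI (hIpos ▸ hp₁) with rfl | rfl
    · exact ⟨u, .inl rfl, rfl⟩
    · exact ⟨v, .inr rfl, rfl⟩
  exact ⟨w, ⟨hw, hIst⟩, Prod.ext hIpos (hI.trans hp₂.symm)⟩

lemma eq_of_rowLT_of_rowLT {u v v' : V} (huv : G.Adj u v) (hlt : D.RowLT u v) (huv' : G.Adj u v')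
    (hlt' : D.RowLT u v') : v = v' := by
  rcases le_total (x v) (x v') with h | h
  · exact (hx.vertex_eq_of_mem_Icc hD huv' hlt' hlt.1.symm
      ⟨(hx.lt_of_rowLT hlt).le, h⟩).resolve_left huv.ne'
  · exact ((hx.vertex_eq_of_mem_Icc hD huv hlt hlt'.1.symm
      ⟨(hx.lt_of_rowLT hlt').le, h⟩).resolve_left huv'.ne').symm

lemma inter_subset_of_rowLT_of_rowLT {u v u' v' : V} (huv : G.Adj u v) (hlt : D.RowLT u v)
    (huv' : G.Adj u' v') (hlt' : D.RowLT u' v') (hne : ¬ (u = u' ∧ v = v')) :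
    segment ℝ (D.place x u) (D.place x v) ∩ segment ℝ (D.place x u') (D.place x v') ⊆
      D.place x '' ({u, v} ∩ {u', v'}) := by
  wlog hle : x u ≤ x u' generalizing u v u' v' with H
  · rw [inter_comm, inter_comm {u, v}]
    exact H huv' hlt' huv hlt (fun h => hne ⟨h.1.symm, h.2.symm⟩) (le_of_not_ge hle)
  rintro p ⟨hp, hp'⟩
  have hp₂ : p.2 = D.row u := by
    simpa [place, hlt.1] using snd_mem_Icc_of_mem_segment hlt.1.le hp
  have hp₂' : p.2 = D.row u' := by
    simpa [place, hlt'.1] using snd_mem_Icc_of_mem_segment hlt'.1.le hp'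
  have hp₁ := fst_mem_Icc_of_mem_segment (hx.lt_of_rowLT hlt).le hp
  have hp₁' := fst_mem_Icc_of_mem_segment (hx.lt_of_rowLT hlt').le hp'
  rcases hx.vertex_eq_of_mem_Icc hD huv hlt (hp₂'.symm.trans hp₂) ⟨hle, hp₁'.1.trans hp₁.2⟩
    with rfl | rfl
  · exact absurd ⟨rfl, hx.eq_of_rowLT_of_rowLT hD huv hlt huv' hlt'⟩ hne
  · exact ⟨u', ⟨.inr rfl, .inl rfl⟩, Prod.ext (le_antisymm hp₁'.1 hp₁.2) hp₂'.symm⟩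

lemma eq_or_eq_of_place_mem_segment_of_isUp {u v w : V} (huv : D.IsUp u v)
    (hw : D.place x w ∈ segment ℝ (D.place x u) (D.place x v)) : w = u ∨ w = v := by
  obtain ⟨I, hI, -, hIuv, hIpos⟩ := huv.exists_onEdge hD x ⟨w, rfl⟩
    (snd_mem_Icc_of_mem_segment huv.2.le hw)
  obtain rfl : I = .vertex w := hx.eq_of_pos_eq hD hI
    (hIpos.trans (fst_eq_xAt_of_mem_segment huv.2.ne hw).symm)
  exact hIuv

lemma eq_or_eq_of_place_mem_segment_of_rowLT {u v w : V} (huv : G.Adj u v) (hlt : D.RowLT u v)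
    (hw : D.place x w ∈ segment ℝ (D.place x u) (D.place x v)) : w = u ∨ w = v := by
  refine hx.vertex_eq_of_mem_Icc hD huv hlt ?_
    (fst_mem_Icc_of_mem_segment (hx.lt_of_rowLT hlt).le hw)
  simpa [place, hlt.1] using snd_mem_Icc_of_mem_segment hlt.1.le hw

theorem isPlanar_ofPos : (PolylineDrawing.ofPos G (D.place x)).IsPlanar := by
  refine PolylineDrawing.isPlanar_ofPos (hx.place_injective hD) ?_ ?_
  · intro u v w huv hw
    wlog h : D.IsDirected u v generalizing u v with H
    · exact (H v u huv.symm (segment_symm ℝ (D.place x u) _ ▸ hw)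
        ((isDirected_or hD huv).resolve_left h)).symm
    rcases h with h | h
    · exact hx.eq_or_eq_of_place_mem_segment_of_isUp hD h hw
    · exact hx.eq_or_eq_of_place_mem_segment_of_rowLT hD huv h hw
  · intro u v s t huv hst hne
    wlog h : D.IsDirected u v generalizing u v with H
    · rw [segment_symm, Set.pair_comm]
      exact H v u huv.symm (Sym2.eq_swap ▸ hne) ((isDirected_or hD huv).resolve_left h)
    wlog h' : D.IsDirected s t generalizing s t with H
    · rw [segment_symm ℝ (D.place x s), Set.pair_comm s]
      exact H t s hst.symm (Sym2.eq_swap (a := s) ▸ hne)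
        ((isDirected_or hD hst).resolve_left h')
    have hne' : ¬ (u = s ∧ v = t) := by rintro ⟨rfl, rfl⟩; exact hne rfl
    rcases h with h | h <;> rcases h' with h' | h'
    · exact hx.inter_subset_of_isUp_of_isUp hD h h' hne'
    · rw [inter_comm, inter_comm {u, v}]
      exact hx.inter_subset_of_rowLT_of_isUp hD hst h' h
    · exact hx.inter_subset_of_rowLT_of_isUp hD huv h h'
    · exact hx.inter_subset_of_rowLT_of_rowLT hD huv h hst h' hne'

end OrderPreserving

section ThreeRows

open scoped Finset

variable {y : ℝ}

/-- All vertices lie in the three consecutive rows centred at height `y`. -/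
def OnThreeRows (D : OrthDrawing G) (y : ℝ) : Prop :=
  ∀ v, D.row v = y - 1 ∨ D.row v = y ∨ D.row v = y + 1

/-- An edge that crosses the middle row, directed upwards. -/
def IsLong (D : OrthDrawing G) (y : ℝ) (s t : V) : Prop :=
  G.Adj s t ∧ D.row s = y - 1 ∧ D.row t = y + 1

/-- The bars of `u` and `v` lie in the same row, that of `u` ending at or before the end of that
of `v`. In a planar drawing, the bars are then equal or `RowLT u v`. -/
def RowLE (D : OrthDrawing G) (u v : V) : Prop := D.row u = D.row v ∧ (D.box u).x2 ≤ (D.box v).x2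

lemma RowLT.rowLE {u v : V} (h : D.RowLT u v) : D.RowLE u v :=
  ⟨h.1, h.2.le.trans (D.box v).hx⟩

lemma RowLT.not_rowLE {u v : V} (h : D.RowLT u v) : ¬ D.RowLE v u :=
  fun h' => (h.2.trans_le (D.box v).hx).not_ge h'.2

lemma RowLE.refl (v : V) : D.RowLE v v := ⟨rfl, le_rfl⟩

lemma RowLE.trans {u v w : V} (h : D.RowLE u v) (h' : D.RowLE v w) : D.RowLE u w :=
  ⟨h.1.trans h'.1, h.2.trans h'.2⟩

lemma RowLE.eq_or_rowLT (hD : D.IsPlanarFlatVR) {u v : V} (h : D.RowLE u v) :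
    u = v ∨ D.RowLT u v :=
  (RowItem.eq_or_hi_lt_lo hD (I := .vertex u) (J := .vertex v) h.1 ⟨(D.box u).hx, le_rfl⟩
    ⟨(D.box v).hx, le_rfl⟩ h.2).imp RowItem.vertex.inj fun hlt => ⟨h.1, hlt⟩

lemma RowLT.trans_rowLE (hD : D.IsPlanarFlatVR) {u v w : V} (h : D.RowLT u v)
    (h' : D.RowLE v w) : D.RowLT u w := by
  rcases h'.eq_or_rowLT hD with rfl | h'
  · exact h
  · exact ⟨h.1.trans h'.1, h.2.trans_le ((D.box v).hx.trans h'.2.le)⟩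

lemma rowLE_of_le (hD : D.IsPlanarFlatVR) {u v : V} (huv : D.row u = D.row v) {c c' : ℝ}
    (hc : c ∈ Icc (D.box u).x1 (D.box u).x2) (hc' : c' ∈ Icc (D.box v).x1 (D.box v).x2)
    (hcc' : c ≤ c') : D.RowLE u v := by
  rcases RowItem.eq_or_hi_lt_lo hD (I := .vertex u) (J := .vertex v) huv hc hc' hcc' with h | h
  · exact RowItem.vertex.inj h ▸ .refl u
  · exact RowLT.rowLE ⟨huv, h⟩

namespace IsLong

lemma isUp {s t : V} (hst : D.IsLong y s t) : D.IsUp s t :=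
  ⟨hst.1, by rw [hst.2.1, hst.2.2]; linarith⟩

lemma mid_mem_Ioo {s t : V} (hst : D.IsLong y s t) : y ∈ Ioo (D.row s) (D.row t) := by
  rw [hst.2.1, hst.2.2]
  exact ⟨by linarith, by linarith⟩

lemma bot_ne_mid {s t : V} (hst : D.IsLong y s t) : D.row s ≠ y := hst.mid_mem_Ioo.1.ne

lemma top_ne_mid {s t : V} (hst : D.IsLong y s t) : D.row t ≠ y := hst.mid_mem_Ioo.2.ne'

lemma row_ne {s t s' t' : V} (hst : D.IsLong y s t) (hst' : D.IsLong y s' t') :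
    D.row s ≠ D.row t' := (hst.mid_mem_Ioo.1.trans hst'.mid_mem_Ioo.2).ne

lemma col_le_col_iff (hD : D.IsPlanarFlatVR) {s t s' t' : V} (hst : D.IsLong y s t)
    (hst' : D.IsLong y s' t') : D.col s t ≤ D.col s' t' ↔ D.RowLE s s' ∧ D.RowLE t t' := by
  obtain ⟨-, hs, ht⟩ := hD.chain_eq_of_isUp hst.isUp
  obtain ⟨-, hs', ht'⟩ := hD.chain_eq_of_isUp hst'.isUp
  refine ⟨fun h => ⟨rowLE_of_le hD (hst.2.1.trans hst'.2.1.symm) hs hs' h,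
    rowLE_of_le hD (hst.2.2.trans hst'.2.2.symm) ht ht' h⟩, fun ⟨hss', htt'⟩ => ?_⟩
  rcases hss'.eq_or_rowLT hD with rfl | hlt
  · rcases htt'.eq_or_rowLT hD with rfl | hlt
    · exact le_rfl
    · exact ht.2.trans (hlt.2.le.trans ht'.1)
  · exact hs.2.trans (hlt.2.le.trans hs'.1)

end IsLong

lemma OnThreeRows.isLong_and_eq_mid (hrows : D.OnThreeRows y) {s t : V} (hst : D.IsUp s t) {k : ℝ}
    (hk : k ∈ Ioo (D.row s) (D.row t)) (hrow : k ∈ range D.row) : D.IsLong y s t ∧ k = y := by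
  obtain ⟨w, rfl⟩ := hrow
  obtain ⟨hsw, hwt⟩ := hk
  rcases hrows s with hs | hs | hs <;> rcases hrows w with hw | hw | hw <;>
    rcases hrows t with ht | ht | ht <;>
    first
    | exact ⟨⟨hst.1, hs, ht⟩, hw⟩
    | linarith

variable [Fintype V]

open Classical in
/-- The vertices charged to an outer vertex `v`: those to the left of `v` in its row, and the
middle vertices to the left of a long edge that has an end at or before `v`. Their number is half
the x-coordinate chosen for `v`. -/
noncomputable def charge (D : OrthDrawing G) (y : ℝ) (v : V) : Finset V :=
  {w | D.RowLT w v ∨ D.row w = y ∧ ∃ s t, D.IsLong y s t ∧ (D.box w).x2 < D.col s t ∧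
    (D.RowLE s v ∨ D.RowLE t v)}

lemma mem_charge {v w : V} : w ∈ D.charge y v ↔ D.RowLT w v ∨ D.row w = y ∧
    ∃ s t, D.IsLong y s t ∧ (D.box w).x2 < D.col s t ∧ (D.RowLE s v ∨ D.RowLE t v) := by
  simp [charge]

lemma mem_charge_iff_rowLT {v w : V} (hw : D.row w ≠ y) :
    w ∈ D.charge y v ↔ D.RowLT w v := by
  simp [mem_charge, hw]

lemma self_notMem_charge {v : V} (hv : D.row v ≠ y) : v ∉ D.charge y v := fun h =>
  ((mem_charge_iff_rowLT hv).1 h).not_rowLE (.refl v)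

lemma charge_mono (hD : D.IsPlanarFlatVR) {v v' : V} (h : D.RowLE v v') :
    D.charge y v ⊆ D.charge y v' := by
  intro w hw
  rw [mem_charge] at hw ⊢
  rcases hw with hlt | ⟨hw, s, t, hst, hcol, hle⟩
  · exact .inl (hlt.trans_rowLE hD h)
  · exact .inr ⟨hw, s, t, hst, hcol, hle.imp (·.trans h) (·.trans h)⟩

lemma charge_ssubset (hD : D.IsPlanarFlatVR) {v v' : V} (hv : D.row v ≠ y) (h : D.RowLT v v') :
    D.charge y v ⊂ D.charge y v' :=
  (Finset.ssubset_iff_of_subset (charge_mono hD h.rowLE)).2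
    ⟨v, (mem_charge_iff_rowLT hv).2 h, self_notMem_charge hv⟩

open Classical in
/-- The middle vertices to the left of the column `c`. -/
noncomputable def midLeft (D : OrthDrawing G) (y c : ℝ) : Finset V :=
  {w | D.row w = y ∧ (D.box w).x2 < c}

lemma mem_midLeft {m : V} {c : ℝ} : m ∈ D.midLeft y c ↔ D.row m = y ∧ (D.box m).x2 < c := by
  simp [midLeft]

lemma midLeft_mono {c c' : ℝ} (h : c ≤ c') : D.midLeft y c ⊆ D.midLeft y c' :=
  Finset.monotone_filter_right _ fun _ _ hw => ⟨hw.1, hw.2.trans_le h⟩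

lemma self_notMem_midLeft (m : V) : m ∉ D.midLeft y (D.box m).x1 :=
  fun h => (mem_midLeft.1 h).2.not_ge (D.box m).hx

lemma card_midLeft_lt {m : V} (hm : D.row m = y) {c : ℝ} (hc : (D.box m).x2 < c) :
    #(D.midLeft y (D.box m).x1) < #(D.midLeft y c) :=
  Finset.card_lt_card <|
    (Finset.ssubset_iff_of_subset (midLeft_mono ((D.box m).hx.trans hc.le))).2
      ⟨m, mem_midLeft.2 ⟨hm, hc⟩, self_notMem_midLeft m⟩

open Classical in
/-- The vertices charged to an end of the edge `st`. -/
noncomputable def edgeCharge (D : OrthDrawing G) (y : ℝ) (s t : V) : Finset V :=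
  D.charge y s ∪ D.charge y t

lemma mem_edgeCharge {s t w : V} :
    w ∈ D.edgeCharge y s t ↔ w ∈ D.charge y s ∨ w ∈ D.charge y t := by
  simp [edgeCharge]

lemma edgeCharge_mono (hD : D.IsPlanarFlatVR) {s t s' t' : V} (hs : D.RowLE s s')
    (ht : D.RowLE t t') : D.edgeCharge y s t ⊆ D.edgeCharge y s' t' := fun _ hw =>
  mem_edgeCharge.2 <| (mem_edgeCharge.1 hw).imp (charge_mono hD hs ·) (charge_mono hD ht ·)

namespace IsLong

lemma bot_notMem_edgeCharge {s t : V} (hst : D.IsLong y s t) :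
    s ∉ D.edgeCharge y s t := by
  rw [mem_edgeCharge, mem_charge_iff_rowLT hst.bot_ne_mid, mem_charge_iff_rowLT hst.bot_ne_mid]
  exact fun h => h.elim (fun h => h.not_rowLE (.refl s)) fun h => hst.row_ne hst h.1

lemma top_notMem_edgeCharge {s t : V} (hst : D.IsLong y s t) :
    t ∉ D.edgeCharge y s t := by
  rw [mem_edgeCharge, mem_charge_iff_rowLT hst.top_ne_mid, mem_charge_iff_rowLT hst.top_ne_mid]
  exact fun h => h.elim (fun h => hst.row_ne hst h.1.symm) fun h => h.not_rowLE (.refl t)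

open Classical in
/-- A middle vertex charged to both `s` and `t` is to the left of a long edge `s₁t₁` with `s₁` at or
before `s` and of a long edge `s₂t₂` with `t₂` at or before `t`. The left one of these two edges
has both ends at or before those of `st`, so it is not to the right of `st`. -/
lemma charge_inter_charge (hD : D.IsPlanarFlatVR) {s t : V} (hst : D.IsLong y s t) :
    D.charge y s ∩ D.charge y t = D.midLeft y (D.col s t) := by
  ext w
  rw [Finset.mem_inter, mem_midLeft]
  refine ⟨fun ⟨hs, ht⟩ => ?_, fun ⟨hw, hcol⟩ => ?_⟩
  · rcases eq_or_ne (D.row w) y with hw | hw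
    · rw [mem_charge] at hs ht
      obtain ⟨-, s₁, t₁, h₁, hcol₁, hle₁⟩ :=
        hs.resolve_left fun h => hst.bot_ne_mid (h.1.symm.trans hw)
      obtain ⟨-, s₂, t₂, h₂, hcol₂, hle₂⟩ :=
        ht.resolve_left fun h => hst.top_ne_mid (h.1.symm.trans hw)
      replace hle₁ := hle₁.resolve_right fun h => hst.row_ne h₁ h.1.symm
      replace hle₂ := hle₂.resolve_left fun h => h₂.row_ne hst h.1
      refine ⟨hw, ?_⟩
      rcases le_total (D.col s₁ t₁) (D.col s₂ t₂) with h | h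
      · exact hcol₁.trans_le <|
          (h₁.col_le_col_iff hD hst).2 ⟨hle₁, ((h₁.col_le_col_iff hD h₂).1 h).2.trans hle₂⟩
      · exact hcol₂.trans_le <|
          (h₂.col_le_col_iff hD hst).2 ⟨((h₂.col_le_col_iff hD h₁).1 h).1.trans hle₁, hle₂⟩
    · rw [mem_charge_iff_rowLT hw] at hs ht
      exact (hst.row_ne hst (hs.1.symm.trans ht.1)).elim
  · exact ⟨mem_charge.2 (.inr ⟨hw, s, t, hst, hcol, .inl (.refl s)⟩),
      mem_charge.2 (.inr ⟨hw, s, t, hst, hcol, .inr (.refl t)⟩)⟩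

open Classical in
lemma card_charge_add_card_charge (hD : D.IsPlanarFlatVR) {s t : V} (hst : D.IsLong y s t) :
    #(D.charge y s) + #(D.charge y t) =
      #(D.edgeCharge y s t) + #(D.midLeft y (D.col s t)) := by
  rw [edgeCharge, ← hst.charge_inter_charge hD, Finset.card_union_add_card_inter]

lemma edgeCharge_ssubset (hD : D.IsPlanarFlatVR) {s t s' t' : V} (hst : D.IsLong y s t)
    (hst' : D.IsLong y s' t') (hcol : D.col s t < D.col s' t') :
    D.edgeCharge y s t ⊂ D.edgeCharge y s' t' := by
  obtain ⟨hs, ht⟩ := (hst.col_le_col_iff hD hst').1 hcol.le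
  rw [Finset.ssubset_iff_of_subset (edgeCharge_mono hD hs ht)]
  rcases hs.eq_or_rowLT hD with rfl | hlt
  · rcases ht.eq_or_rowLT hD with rfl | hlt
    · exact (hcol.false).elim
    · exact ⟨t, mem_edgeCharge.2 (.inr ((mem_charge_iff_rowLT hst.top_ne_mid).2 hlt)),
        hst.top_notMem_edgeCharge⟩
  · exact ⟨s, mem_edgeCharge.2 (.inl ((mem_charge_iff_rowLT hst.bot_ne_mid).2 hlt)),
      hst.bot_notMem_edgeCharge⟩

lemma card_charge_add_lt_of_col_lt (hD : D.IsPlanarFlatVR) {s t s' t' : V}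
    (hst : D.IsLong y s t) (hst' : D.IsLong y s' t') (hcol : D.col s t < D.col s' t') :
    #(D.charge y s) + #(D.charge y t) < #(D.charge y s') + #(D.charge y t') := by
  rw [hst.card_charge_add_card_charge hD, hst'.card_charge_add_card_charge hD]
  exact add_lt_add_of_lt_of_le (Finset.card_lt_card (hst.edgeCharge_ssubset hD hst' hcol))
    (Finset.card_le_card (midLeft_mono hcol.le))

end IsLong

open Classical in
/-- The largest number of vertices charged to an end of one long edge to the left of the
column `c`. -/
noncomputable def maxChargeLeft (D : OrthDrawing G) (y c : ℝ) : ℕ :=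
  ({e : V × V | D.IsLong y e.1 e.2 ∧ D.col e.1 e.2 < c} : Finset (V × V)).sup
    fun e => #(D.edgeCharge y e.1 e.2)

open Classical in
lemma maxChargeLeft_mono {c c' : ℝ} (h : c ≤ c') :
    D.maxChargeLeft y c ≤ D.maxChargeLeft y c' :=
  Finset.sup_mono (Finset.monotone_filter_right _ fun _ _ he => ⟨he.1, he.2.trans_le h⟩)

lemma maxChargeLeft_lt_iff {c : ℝ} {n : ℕ} (hn : 0 < n) : D.maxChargeLeft y c < n ↔
    ∀ s t, D.IsLong y s t → D.col s t < c → #(D.edgeCharge y s t) < n := by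
  simp [maxChargeLeft, Finset.sup_lt_iff hn]

lemma maxChargeLeft_lt_card [Nonempty V] (c : ℝ) : D.maxChargeLeft y c < Fintype.card V :=
  (maxChargeLeft_lt_iff Fintype.card_pos).2 fun _ _ hst _ =>
    Finset.card_lt_univ_of_notMem hst.bot_notMem_edgeCharge

namespace IsLong

lemma card_edgeCharge_le {s t : V} (hst : D.IsLong y s t) {c : ℝ} (hc : D.col s t < c) :
    #(D.edgeCharge y s t) ≤ D.maxChargeLeft y c :=
  Finset.le_sup (f := fun e : V × V => #(D.edgeCharge y e.1 e.2)) (b := (s, t))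
    (by simpa using ⟨hst, hc⟩)

lemma maxChargeLeft_lt (hD : D.IsPlanarFlatVR) {s t m : V} (hst : D.IsLong y s t)
    (hm : D.row m = y) (hcol : (D.box m).x2 < D.col s t) :
    D.maxChargeLeft y (D.box m).x1 < #(D.edgeCharge y s t) := by
  have hmem : m ∈ D.edgeCharge y s t :=
    mem_edgeCharge.2 (.inl (mem_charge.2 (.inr ⟨hm, s, t, hst, hcol, .inl (.refl s)⟩)))
  refine (maxChargeLeft_lt_iff (Finset.card_pos.2 ⟨m, hmem⟩)).2 fun s' t' hst' hlt => ?_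
  exact Finset.card_lt_card
    (hst'.edgeCharge_ssubset hD hst (hlt.trans_le ((D.box m).hx.trans hcol.le)))

end IsLong

open Classical in
/-- The x-coordinates of the straight-line drawing, where `y` is the height of the middle row. Those
of the middle vertices are chosen just large enough to exceed the points where the long edges to
their left cross the middle row. -/
noncomputable def xCoord (D : OrthDrawing G) (y : ℝ) (v : V) : ℕ :=
  if D.row v = y then D.maxChargeLeft y (D.box v).x1 + #(D.midLeft y (D.box v).x1) + 1
  else 2 * #(D.charge y v)

lemma xCoord_of_eq_mid {v : V} (hv : D.row v = y) :
    D.xCoord y v = D.maxChargeLeft y (D.box v).x1 + #(D.midLeft y (D.box v).x1) + 1 :=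
  if_pos hv

lemma xCoord_of_ne_mid {v : V} (hv : D.row v ≠ y) : D.xCoord y v = 2 * #(D.charge y v) :=
  if_neg hv

lemma xCoord_lt_two_mul_card (v : V) : D.xCoord y v < 2 * Fintype.card V := by
  by_cases hv : D.row v = y
  · have : Nonempty V := ⟨v⟩
    have hmax := maxChargeLeft_lt_card (D := D) (y := y) (D.box v).x1
    have hmid := Finset.card_lt_univ_of_notMem (self_notMem_midLeft (D := D) (y := y) v)
    rw [xCoord_of_eq_mid hv]
    omega
  · have hcharge := Finset.card_lt_univ_of_notMem (self_notMem_charge hv)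
    rw [xCoord_of_ne_mid hv]
    omega

lemma RowLT.xCoord_lt (hD : D.IsPlanarFlatVR) {u v : V} (h : D.RowLT u v) :
    D.xCoord y u < D.xCoord y v := by
  by_cases hu : D.row u = y
  · have hmax := maxChargeLeft_mono (D := D) (y := y) ((D.box u).hx.trans h.2.le)
    have hmid := card_midLeft_lt hu h.2
    rw [xCoord_of_eq_mid hu, xCoord_of_eq_mid (h.1.symm.trans hu)]
    omega
  · have hcharge := Finset.card_lt_card (charge_ssubset hD hu h)
    rw [xCoord_of_ne_mid hu, xCoord_of_ne_mid fun hv => hu (h.1.trans hv)]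
    omega

namespace IsLong

lemma card_charge_add_lt_xCoord (hD : D.IsPlanarFlatVR) {s t m : V} (hst : D.IsLong y s t)
    (hm : D.row m = y) (hcol : D.col s t < (D.box m).x1) :
    #(D.charge y s) + #(D.charge y t) < D.xCoord y m := by
  rw [hst.card_charge_add_card_charge hD, xCoord_of_eq_mid hm, Nat.lt_succ_iff]
  exact add_le_add (hst.card_edgeCharge_le hcol) (Finset.card_le_card (midLeft_mono hcol.le))

lemma xCoord_lt_card_charge_add (hD : D.IsPlanarFlatVR) {s t m : V} (hst : D.IsLong y s t)
    (hm : D.row m = y) (hcol : (D.box m).x2 < D.col s t) :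
    D.xCoord y m < #(D.charge y s) + #(D.charge y t) := by
  have hmax := hst.maxChargeLeft_lt hD hm hcol
  have hmid := card_midLeft_lt hm hcol
  rw [hst.card_charge_add_card_charge hD, xCoord_of_eq_mid hm]
  omega

lemma xAt_place_xCoord {s t : V} (hst : D.IsLong y s t) :
    xAt (D.place (fun v => (D.xCoord y v : ℝ)) s) (D.place (fun v => (D.xCoord y v : ℝ)) t) y =
      ((#(D.charge y s) + #(D.charge y t) : ℕ) : ℝ) := by
  have hs : D.row s = y - 1 := hst.2.1
  have ht : D.row t = y + 1 := hst.2.2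
  simp only [xAt, place, xCoord_of_ne_mid hst.bot_ne_mid, xCoord_of_ne_mid hst.top_ne_mid, hs, ht]
  push_cast
  ring

end IsLong

theorem OnThreeRows.orderPreserving (hrows : D.OnThreeRows y) (hD : D.IsPlanarFlatVR) :
    D.OrderPreserving fun v => (D.xCoord y v : ℝ) := by
  rintro (v | ⟨s, t, k, hst, hk, hrow⟩) (w | ⟨s', t', k', hst', hk', hrow'⟩) hlevel hlt
  · exact Nat.cast_lt.2 (RowLT.xCoord_lt hD ⟨hlevel, hlt⟩)
  · obtain ⟨hlong, rfl⟩ := hrows.isLong_and_eq_mid hst' hk' hrow'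
    exact (Nat.cast_lt.2 (hlong.xCoord_lt_card_charge_add hD hlevel hlt)).trans_eq
      hlong.xAt_place_xCoord.symm
  · obtain ⟨hlong, rfl⟩ := hrows.isLong_and_eq_mid hst hk hrow
    exact hlong.xAt_place_xCoord.trans_lt
      (Nat.cast_lt.2 (hlong.card_charge_add_lt_xCoord hD hlevel.symm hlt))
  · obtain ⟨hlong, rfl⟩ := hrows.isLong_and_eq_mid hst hk hrow
    obtain ⟨hlong', rfl⟩ := hrows.isLong_and_eq_mid hst' hk' hrow'
    exact hlong.xAt_place_xCoord.trans_lt <|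
      (Nat.cast_lt.2 (hlong.card_charge_add_lt_of_col_lt hD hlong' hlt)).trans_eq
        hlong'.xAt_place_xCoord.symm

end ThreeRows

lemma mk_mem_points (D : OrthDrawing G) (v : V) : ((D.box v).x1, (D.box v).y1) ∈ D.points :=
  .inl (mem_iUnion.2 ⟨v, .inl rfl⟩)

lemma InHeight.exists_onThreeRows (hheight : D.InHeight 3)
    (hint : ∀ v, ∃ m : ℤ, D.row v = m) : ∃ y, D.OnThreeRows y := by
  obtain ⟨y₀, hy₀⟩ := hheight
  refine ⟨y₀ + 1, fun v => ?_⟩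
  obtain ⟨m, hm⟩ := hint v
  obtain ⟨hlow, hhigh⟩ : (y₀ : ℝ) ≤ D.row v ∧ D.row v ≤ y₀ + (3 : ℕ) - 1 :=
    hy₀ _ (D.mk_mem_points v)
  rw [hm] at hlow hhigh ⊢
  norm_cast at hlow hhigh ⊢
  omega

end OrthDrawing

theorem flatVR_height_three_to_straightLine_linear_width_general {V : Type*} [Fintype V]
    {G : SimpleGraph V} (D : OrthDrawing G) (hplanar : D.IsPlanar) (hflat : D.IsFlat)
    (hVR : D.IsVR) (hrow : ∀ v, ∃ m : ℤ, (D.box v).y1 = m) (hheight : D.InHeight 3) :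
    ∃ D' : PolylineDrawing G, D'.IsPlanar ∧ D'.IsStraightLine ∧ D'.IntCoords ∧
      (∀ v, (D'.pos v).2 = (D.box v).y1) ∧
      (∀ v w : V, (D.box v).y1 = (D.box w).y1 → (D.box v).x2 < (D.box w).x1 →
        (D'.pos v).1 < (D'.pos w).1) ∧
      D'.InWidth (2 * Fintype.card V) := by
  have hD : D.IsPlanarFlatVR := ⟨hplanar, hflat, hVR⟩
  obtain ⟨y, hrows⟩ := hheight.exists_onThreeRows hrow
  have hx := hrows.orderPreserving hD
  refine ⟨PolylineDrawing.ofPos G (D.place fun v => (D.xCoord y v : ℝ)), hx.isPlanar_ofPos hD,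
    fun _ _ => rfl, ?_, fun _ => rfl, fun v w hvw hlt => hx.lt_of_rowLT ⟨hvw, hlt⟩, 0, ?_⟩
  · rw [PolylineDrawing.IntCoords, PolylineDrawing.points_ofPos]
    rintro _ ⟨v, rfl⟩
    obtain ⟨m, hm⟩ := hrow v
    exact ⟨⟨D.xCoord y v, by simp [OrthDrawing.place]⟩, m, hm⟩
  · rw [PolylineDrawing.points_ofPos]
    rintro _ ⟨v, rfl⟩
    have hlt : ((D.xCoord y v + 1 : ℕ) : ℝ) ≤ (2 * Fintype.card V : ℕ) :=
      Nat.cast_le.2 (OrthDrawing.xCoord_lt_two_mul_card v)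
    simp only [OrthDrawing.place]
    push_cast at hlt ⊢
    exact ⟨Nat.cast_nonneg _, by linarith⟩

/-- There is an absolute constant `c` such that any planar flat
visibility representation of height `3` of a finite simple graph `G` with `n` vertices
can be transformed into a planar straight-line drawing with the same y-coordinates,
the same left-to-right order in each row, and width at most `c·n`. -/
theorem flatVR_height_three_to_straightLine_linear_width :
    ∃ c : ℕ, ∀ (V : Type) [Fintype V], ∀ (G : SimpleGraph V) (D : OrthDrawing G),
      D.IsPlanar → D.IsFlat → D.IsVR → D.IntCoords → D.InHeight 3 →
      ∃ D' : PolylineDrawing G, D'.IsPlanar ∧ D'.IsStraightLine ∧ D'.IntCoords ∧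
        (∀ v, (D'.pos v).2 = (D.box v).y1) ∧
        (∀ v w : V, (D.box v).y1 = (D.box w).y1 → (D.box v).x2 < (D.box w).x1 →
          (D'.pos v).1 < (D'.pos w).1) ∧
        D'.InWidth (c * Fintype.card V) := by
  refine ⟨2, fun V _ G D hplanar hflat hVR hint hheight => ?_⟩
  exact flatVR_height_three_to_straightLine_linear_width_general D hplanar hflat hVR
    (fun v => (hint _ (D.mk_mem_points v)).2) hheight
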